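/- Let G be a group and N a normal subgroup of G. If N and G/N are both locally indicable, then G is locally indicable. -/

import Mathlib

/-- A group `G` is locally indicable if every non-trivial finitely generated
subgroup of `G` admits a surjective homomorphism onto `ℤ`. -/
def LocallyIndicable (G : Type*) [Group G] : Prop :=
  ∀ H : Subgroup G, H.FG → H ≠ ⊥ → ∃ f : H →* Multiplicative ℤ, Function.Surjective f

namespace LocallyIndicable

variable {G K Q : Type*} [Group G] [Group K] [Group Q]

theorem exists_surjective_of_hom_ne_one [Group.FG K] (hG : LocallyIndicable G)
    {φ : K →* G} (hφ : φ ≠ 1) : ∃ f : K →* Multiplicative ℤ, Function.Surjective f := by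
  have range_fg : φ.range.FG := (Group.fg_iff_subgroup_fg _).mp inferInstance
  have range_ne_bot : φ.range ≠ ⊥ := mt MonoidHom.range_eq_bot_iff.mp hφ
  obtain ⟨f, hf⟩ := hG φ.range range_fg range_ne_bot
  exact ⟨f.comp φ.rangeRestrict, hf.comp φ.rangeRestrict_surjective⟩

theorem of_ker (φ : G →* Q) (hker : LocallyIndicable φ.ker) (hQ : LocallyIndicable Q) :
    LocallyIndicable G := by
  intro H hfg hne
  have : Group.FG H := (Group.fg_iff_subgroup_fg H).mpr hfg
  by_cases hφ : φ.domRestrict H = 1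
  · have hle : H ≤ φ.ker := MonoidHom.domRestrict_eq_one_iff.mp hφ
    have inclusion_ne_one : Subgroup.inclusion hle ≠ 1 := by
      rw [ne_eq, ← MonoidHom.range_eq_bot_iff, Subgroup.inclusion_range,
        Subgroup.subgroupOf_eq_bot]
      exact fun hdisj ↦ hne (hdisj.eq_bot_of_le hle)
    exact hker.exists_surjective_of_hom_ne_one inclusion_ne_one
  · exact hQ.exists_surjective_of_hom_ne_one hφ

end LocallyIndicable

/-- An extension of locally indicable groups is locally indicable. -/
theorem stmt_5 {G : Type*} [Group G] (N : Subgroup G) [N.Normal]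
    (hN : LocallyIndicable N) (hQ : LocallyIndicable (G ⧸ N)) :
    LocallyIndicable G :=
  .of_ker (QuotientGroup.mk' N) (by rwa [QuotientGroup.ker_mk']) hQ
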